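/- For every α ≥ 1 there exists a constant c = c(α) such that for all a, b ∈ ℝ^N (N ∈ ℕ) one has |b − a|^α ≤ c·|b^⟦α⟧ − a^⟦α⟧|. -/

import Mathlib

/-!
Fix the norms `r = ‖a‖`, `s = ‖b‖` and let `t` be the cosine of the angle between the vectors. Then
`‖b - a‖²` is the average of `(s - r)²` and `(s + r)²` with weights `(1 + t) / 2` and `(1 - t) / 2`.
Signed powers keep the angle and raise norms to the power `α`, so the squared distance of the signed
powers is the average of `(s ^ α - r ^ α)²` and `(s ^ α + r ^ α)²` with the same weights. Since
`x ↦ x ^ α` is convex, it suffices to compare the endpoints `t = ±1`, that is, collinear vectors.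
The constant `2 ^ (α - 1)` obtained in this way is attained at `b = -a`.
-/

noncomputable section

/-- The signed power `v^⟦α⟧ = |v|^{α-1} v` of a vector (interpreted as `0` for `v = 0`). -/
def vpow {N : ℕ} (α : ℝ) (v : EuclideanSpace ℝ (Fin N)) : EuclideanSpace ℝ (Fin N) :=
  ‖v‖ ^ (α - 1) • v

section RealPowers

variable {α r s t : ℝ}

theorem add_rpow_le_two_rpow_mul (hα : 1 ≤ α) (hr : 0 ≤ r) (hs : 0 ≤ s) :
    (s + r) ^ α ≤ 2 ^ (α - 1) * (s ^ α + r ^ α) := by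
  lift r to NNReal using hr
  lift s to NNReal using hs
  exact_mod_cast NNReal.rpow_add_le_mul_rpow_add_rpow s r hα

theorem abs_sub_rpow_le_abs_rpow_sub_rpow (hα : 1 ≤ α) (hr : 0 ≤ r) (hs : 0 ≤ s) :
    |s - r| ^ α ≤ |s ^ α - r ^ α| := by
  wlog hrs : r ≤ s generalizing r s
  · rw [abs_sub_comm s, abs_sub_comm (s ^ α)]
    exact this hs hr (le_of_not_ge hrs)
  have superadditive := Real.add_rpow_le_rpow_add (sub_nonneg.2 hrs) hr hα
  rw [sub_add_cancel] at superadditive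
  rw [abs_of_nonneg (sub_nonneg.2 hrs)]
  exact (le_sub_iff_add_le.2 superadditive).trans (le_abs_self _)

theorem rpow_average_sq_le (hα : 1 ≤ α) (hr : 0 ≤ r) (hs : 0 ≤ s) (ht : |t| ≤ 1) :
    ((1 + t) / 2 * (s - r) ^ 2 + (1 - t) / 2 * (s + r) ^ 2) ^ α ≤
      (2 ^ (α - 1)) ^ 2 *
        ((1 + t) / 2 * (s ^ α - r ^ α) ^ 2 + (1 - t) / 2 * (s ^ α + r ^ α) ^ 2) := by
  obtain ⟨ht₁, ht₂⟩ := abs_le.1 ht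
  have hplus : 0 ≤ (1 + t) / 2 := by linarith
  have hminus : 0 ≤ (1 - t) / 2 := by linarith
  have one_le_two_rpow : 1 ≤ (2 : ℝ) ^ (α - 1) :=
    Real.one_le_rpow one_le_two (sub_nonneg.2 hα)
  have hsub : ((s - r) ^ 2) ^ α ≤ (2 ^ (α - 1)) ^ 2 * (s ^ α - r ^ α) ^ 2 := calc
    ((s - r) ^ 2) ^ α = (|s - r| ^ α) ^ 2 := by
      rw [Real.rpow_pow_comm (abs_nonneg _), sq_abs]
    _ ≤ |s ^ α - r ^ α| ^ 2 := by
      gcongr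
      exact abs_sub_rpow_le_abs_rpow_sub_rpow hα hr hs
    _ = (s ^ α - r ^ α) ^ 2 := sq_abs _
    _ ≤ (2 ^ (α - 1)) ^ 2 * (s ^ α - r ^ α) ^ 2 :=
      le_mul_of_one_le_left (sq_nonneg _) (one_le_pow₀ one_le_two_rpow)
  have hadd : ((s + r) ^ 2) ^ α ≤ (2 ^ (α - 1)) ^ 2 * (s ^ α + r ^ α) ^ 2 := by
    rw [← Real.rpow_pow_comm (add_nonneg hs hr), ← mul_pow]
    gcongr
    exact add_rpow_le_two_rpow_mul hα hr hs
  calc ((1 + t) / 2 * (s - r) ^ 2 + (1 - t) / 2 * (s + r) ^ 2) ^ α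
      ≤ (1 + t) / 2 * ((s - r) ^ 2) ^ α + (1 - t) / 2 * ((s + r) ^ 2) ^ α :=
        (convexOn_rpow hα).2 (Set.mem_Ici.2 (sq_nonneg _)) (Set.mem_Ici.2 (sq_nonneg _))
          hplus hminus (by ring)
    _ ≤ (1 + t) / 2 * ((2 ^ (α - 1)) ^ 2 * (s ^ α - r ^ α) ^ 2) +
          (1 - t) / 2 * ((2 ^ (α - 1)) ^ 2 * (s ^ α + r ^ α) ^ 2) := by
        gcongr
    _ = _ := by ring

end RealPowers

section InnerProductSpace

open InnerProductGeometry

variable {E : Type*} [NormedAddCommGroup E]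

/-- The signed power `v^⟦α⟧ = |v|^{α-1} v` in an arbitrary real normed space; `vpow` is the case of
`ℝ^N`. At `v = 0` the value is `0`, whatever the junk value of `0 ^ (α - 1)`. -/
def signedPow [NormedSpace ℝ E] (α : ℝ) (v : E) : E :=
  ‖v‖ ^ (α - 1) • v

theorem norm_signedPow [NormedSpace ℝ E] {α : ℝ} (hα : α ≠ 0) (v : E) :
    ‖signedPow α v‖ = ‖v‖ ^ α := by
  rw [signedPow, norm_smul, Real.norm_of_nonneg (by positivity),
    ← Real.rpow_add_one' (norm_nonneg v) (by rwa [sub_add_cancel]), sub_add_cancel]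

variable [InnerProductSpace ℝ E]

theorem angle_signedPow_left (α : ℝ) (x y : E) : angle (signedPow α x) y = angle x y := by
  rcases eq_or_ne x 0 with rfl | hx
  · rw [signedPow, smul_zero]
  · exact angle_smul_left_of_pos x y (Real.rpow_pos_of_pos (norm_pos_iff.2 hx) _)

theorem angle_signedPow_signedPow (α : ℝ) (x y : E) :
    angle (signedPow α x) (signedPow α y) = angle x y := by
  rw [angle_signedPow_left, angle_comm, angle_signedPow_left, angle_comm]

theorem norm_sub_sq_eq_average (x y : E) :
    ‖x - y‖ ^ 2 = (1 + Real.cos (angle x y)) / 2 * (‖x‖ - ‖y‖) ^ 2 +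
      (1 - Real.cos (angle x y)) / 2 * (‖x‖ + ‖y‖) ^ 2 := by
  rw [norm_sub_sq_real, ← cos_angle_mul_norm_mul_norm]
  ring

theorem vpow_diff_estimate_general {α : ℝ} (hα : 1 ≤ α) (a b : E) :
    ‖b - a‖ ^ α ≤ 2 ^ (α - 1) * ‖signedPow α b - signedPow α a‖ := by
  have hα₀ : α ≠ 0 := (zero_lt_one.trans_le hα).ne'
  refine (sq_le_sq₀ (by positivity) (by positivity)).1 ?_
  rw [Real.rpow_pow_comm (norm_nonneg _), mul_pow, norm_sub_sq_eq_average b a,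
    norm_sub_sq_eq_average (signedPow α b), angle_signedPow_signedPow,
    norm_signedPow hα₀, norm_signedPow hα₀]
  exact rpow_average_sq_le hα (norm_nonneg a) (norm_nonneg b) (Real.abs_cos_le_one _)

end InnerProductSpace

/-- For every `α ≥ 1` there is a constant `c = c(α)` such that for all `a, b ∈ ℝ^N` one has
`|b − a|^α ≤ c·|b^⟦α⟧ − a^⟦α⟧|`. -/
theorem vpow_diff_estimate (α : ℝ) (hα : 1 ≤ α) :
    ∃ c : ℝ, 0 < c ∧ ∀ (N : ℕ) (a b : EuclideanSpace ℝ (Fin N)),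
      ‖b - a‖ ^ α ≤ c * ‖vpow α b - vpow α a‖ :=
  ⟨2 ^ (α - 1), by positivity, fun _ => vpow_diff_estimate_general hα⟩

end
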